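/- arXiv:1203.2889 — 2 statements merged into one kernel-verified Lean document; each statement's English description precedes it below -/
import Mathlib

section
/- Let k be a field of characteristic ≠ 2, V a finite-dimensional k-vector space, and Q a quadratic form on V whose polar form is nondegenerate. Let g be a unit of Cl(V,Q) lying in the even part Cl₊(V,Q), and let σ : V → V be a k-linear map such that ι(σ(v)) = g · ι(v) · g⁻¹ for all v ∈ V. Then the determinant of σ equals 1; that is, the adjoint action of CSpin(V) lands in the special orthogonal group SO(V,Q). -/
section Helpers
open CliffordAlgebra

theorem aux_contract {k V : Type*} [Field k] [AddCommGroup V] [Module k V]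
    (Q : QuadraticForm k V) (d : Module.Dual k V) (l : List V) (hl : ∀ w ∈ l, d w = 0) :
    contractLeft d (l.map (ι Q)).prod = 0 := by
  induction l with
  | nil => simp
  | cons a t ih =>
    simp only [List.map_cons, List.prod_cons, contractLeft_ι_mul]
    rw [ih (fun w hw => hl w (List.mem_cons_of_mem _ hw)), hl a List.mem_cons_self]
    simp

theorem aux_change {k V : Type*} [Field k] [AddCommGroup V] [Module k V]
    {Q Q' : QuadraticForm k V} {B : LinearMap.BilinForm k V}
    (h : B.toQuadraticMap = Q' - Q) (l : List V) (hl : l.Pairwise (fun x y => B x y = 0)) :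
    changeForm h (l.map (ι Q)).prod = (l.map (ι Q')).prod := by
  induction l with
  | nil => simp
  | cons a t ih =>
    rw [List.pairwise_cons] at hl
    simp only [List.map_cons, List.prod_cons, changeForm_ι_mul]
    rw [ih hl.2, aux_contract Q' (B a) t hl.1, sub_zero]

theorem aux_comm1 {k V : Type*} [Field k] [AddCommGroup V] [Module k V]
    (Q : QuadraticForm k V) (v : V) (l : List V) (hl : ∀ w ∈ l, Q.IsOrtho v w) :
    ι Q v * (l.map (ι Q)).prod = (-1 : k) ^ l.length • ((l.map (ι Q)).prod * ι Q v) := by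
  induction l with
  | nil => simp
  | cons a t ih =>
    simp only [List.map_cons, List.prod_cons, List.length_cons]
    rw [← mul_assoc, ι_mul_ι_comm_of_isOrtho (hl a List.mem_cons_self), neg_mul, mul_assoc,
      ih (fun w hw => hl w (List.mem_cons_of_mem _ hw)), pow_succ]
    simp [mul_assoc]

theorem aux_comm2 {k V : Type*} [Field k] [AddCommGroup V] [Module k V]
    (Q : QuadraticForm k V) (v : V) (l : List V) (hl : l.Pairwise Q.IsOrtho) (hv : v ∈ l) :
    ι Q v * (l.map (ι Q)).prod = (-1 : k) ^ (l.length + 1) • ((l.map (ι Q)).prod * ι Q v) := by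
  induction l with
  | nil => simp at hv
  | cons a t ih =>
    rw [List.pairwise_cons] at hl
    simp only [List.map_cons, List.prod_cons, List.length_cons]
    rcases List.mem_cons.1 hv with rfl | hv
    · conv_lhs => rw [aux_comm1 Q v t hl.1, mul_smul_comm, ← mul_assoc]
      rw [pow_succ, pow_succ, mul_neg_one, mul_neg_one, neg_neg]
    · rw [← mul_assoc, ι_mul_ι_comm_of_isOrtho (hl.1 v hv).symm, neg_mul, mul_assoc,
        ih hl.2 hv, pow_succ _ (t.length + 1)]
      simp [mul_assoc]

theorem aux_conj {A : Type*} [Monoid A] {V : Type*} (f : V → A) (s : V → V) (g : Aˣ)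
    (h : ∀ v, f (s v) = g * f v * (g⁻¹ : Aˣ)) (l : List V) :
    ((l.map s).map f).prod = g * (l.map f).prod * (g⁻¹ : Aˣ) := by
  induction l with
  | nil => simp
  | cons a t ih =>
    simp only [List.map_cons, List.prod_cons]
    rw [ih, h]
    simp [mul_assoc]

theorem aux_alt {k V N : Type*} [Field k] [AddCommGroup V] [Module k V] [AddCommGroup N]
    [Module k N] {n : ℕ} (e : Module.Basis (Fin n) k V) (f : V [⋀^Fin n]→ₗ[k] N)
    (s : V →ₗ[k] V) : f (s ∘ e) = LinearMap.det s • f e := by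
  have key : f = (LinearMap.toSpanSingleton k N (f e)).compAlternatingMap e.det := by
    refine Module.Basis.ext_alternating e fun i h => ?_
    let τ : Equiv.Perm (Fin n) := Equiv.ofBijective i (Finite.injective_iff_bijective.1 h)
    change f (e ∘ τ) =
      ((LinearMap.toSpanSingleton k N (f e)).compAlternatingMap e.det) (e ∘ τ)
    rw [AlternatingMap.map_perm, AlternatingMap.map_perm]
    simp [Module.Basis.det_self]
  have h1 := congrArg (fun F : V [⋀^Fin n]→ₗ[k] N => F (s ∘ e)) key
  simpa [Module.Basis.det_comp, Module.Basis.det_self] using h1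

end Helpers


/-- Over a field of characteristic ≠ 2, with `Q` a quadratic form with nondegenerate polar
form, conjugation by an even unit of the Clifford algebra preserving `ι(V)` has
determinant 1: the adjoint action of `CSpin(V)` lands in `SO(V,Q)`. -/
theorem cspin_adjoint_det_one (k : Type*) [Field k] (h2 : (2 : k) ≠ 0)
    (V : Type*) [AddCommGroup V] [Module k V] [FiniteDimensional k V]
    (Q : QuadraticForm k V)
    (hQ : LinearMap.BilinForm.Nondegenerate (QuadraticMap.polarBilin Q))
    (g : (CliffordAlgebra Q)ˣ)
    (hg : (g : CliffordAlgebra Q) ∈ CliffordAlgebra.even Q)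
    (σ : V →ₗ[k] V)
    (h : ∀ v : V, CliffordAlgebra.ι Q (σ v) =
      (g : CliffordAlgebra Q) * CliffordAlgebra.ι Q v *
        ((g⁻¹ : (CliffordAlgebra Q)ˣ) : CliffordAlgebra Q)) :
    LinearMap.det σ = 1 := by
  classical
  have : Invertible (2 : k) := invertibleOfNonzero h2
  obtain ⟨e, he⟩ := LinearMap.BilinForm.exists_orthogonal_basis
    (B := QuadraticMap.polarBilin Q) ⟨fun x y => QuadraticMap.polar_comm Q x y⟩
  have hne := he.not_isOrtho_basis_self_of_separatingLeft hQ.1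
  have hort : ∀ i j, i ≠ j → Q.IsOrtho (e i) (e j) := fun i j hij =>
    QuadraticMap.isOrtho_polarBilin.1 (he hij)
  have hQs : ∀ v, Q (σ v) = Q v := by
    intro v
    have h1 := CliffordAlgebra.ι_sq_scalar Q (σ v)
    rw [h v] at h1
    have h3 : (g : CliffordAlgebra Q) * CliffordAlgebra.ι Q v *
        ((g⁻¹ : (CliffordAlgebra Q)ˣ) : CliffordAlgebra Q) *
        ((g : CliffordAlgebra Q) * CliffordAlgebra.ι Q v *
        ((g⁻¹ : (CliffordAlgebra Q)ˣ) : CliffordAlgebra Q)) =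
        (g : CliffordAlgebra Q) * (CliffordAlgebra.ι Q v * CliffordAlgebra.ι Q v) *
        ((g⁻¹ : (CliffordAlgebra Q)ˣ) : CliffordAlgebra Q) := by
      simp [mul_assoc, -CliffordAlgebra.ι_sq_scalar]
    rw [h3, CliffordAlgebra.ι_sq_scalar, ← Algebra.commutes, mul_assoc, Units.mul_inv,
      mul_one] at h1
    exact ((algebraMap k (CliffordAlgebra Q)).injective h1).symm
  have horts : ∀ x y, Q.IsOrtho x y → Q.IsOrtho (σ x) (σ y) := by
    intro x y hxy
    rw [QuadraticMap.isOrtho_def] at *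
    rw [← map_add, hQs, hQs, hQs, hxy]
  set l := List.ofFn e with hl
  have hlp : l.Pairwise Q.IsOrtho := by
    rw [hl, List.pairwise_ofFn]
    exact fun i j hij => hort i j hij.ne
  have hlp' : (l.map σ).Pairwise Q.IsOrtho :=
    List.Pairwise.map _ (fun x y hxy => horts x y hxy) hlp
  set ω := (l.map (CliffordAlgebra.ι Q)).prod with hω
  have hcv : ∀ v, CliffordAlgebra.ι Q v * ω =
      (-1 : k) ^ (l.length + 1) • (ω * CliffordAlgebra.ι Q v) := by
    have : (LinearMap.mulRight k ω) ∘ₗ CliffordAlgebra.ι Q =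
        (-1 : k) ^ (l.length + 1) • ((LinearMap.mulLeft k ω) ∘ₗ CliffordAlgebra.ι Q) := by
      refine e.ext fun i => ?_
      exact aux_comm2 Q (e i) l hlp (by rw [hl, List.mem_ofFn]; exact ⟨i, rfl⟩)
    intro v
    exact LinearMap.congr_fun this v
  have hce : ∀ x (hx : x ∈ CliffordAlgebra.evenOdd Q 0), x * ω = ω * x := by
    intro x hx
    induction x, hx using CliffordAlgebra.even_induction with
    | algebraMap r => exact Algebra.commutes r ω
    | add x y hx hy h1 h2 => rw [add_mul, mul_add, h1, h2]
    | ι_mul_ι_mul a b x hx ih =>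
      rw [mul_assoc, ih, ← mul_assoc, mul_assoc _ _ ω, hcv b, mul_smul_comm, ← mul_assoc, hcv a,
        smul_mul_assoc, smul_mul_assoc, smul_mul_assoc, smul_smul, ← mul_pow]
      simp [mul_assoc]
  have hgω := hce g hg
  have hconj := aux_conj (CliffordAlgebra.ι Q) σ g h l
  rw [← hω, hgω, mul_assoc, Units.mul_inv, mul_one] at hconj
  have hB : ∀ x y, Q.IsOrtho x y → QuadraticMap.associated (R := k) (-Q) x y = 0 := by
    intro x y hxy
    have : QuadraticMap.polar Q x y = 0 := QuadraticMap.isOrtho_polarBilin.2 hxy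
    simp only [map_neg, LinearMap.neg_apply, neg_eq_zero]
    exact QuadraticMap.associated_isOrtho.2 hxy
  have h1 := aux_change (CliffordAlgebra.changeForm.associated_neg_proof (Q := Q)) l
    (hlp.imp (fun {x y} => hB x y))
  have h3 := aux_change (CliffordAlgebra.changeForm.associated_neg_proof (Q := Q)) (l.map σ)
    (hlp'.imp (fun {x y} => hB x y))
  rw [hconj] at h3
  have h4 := aux_alt e (ExteriorAlgebra.ιMulti k _) σ
  have h5 : ExteriorAlgebra.ιMulti k _ (σ ∘ e) =
      ((l.map σ).map (CliffordAlgebra.ι (0 : QuadraticForm k V))).prod := by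
    rw [hl, List.map_ofFn, List.map_ofFn]; rfl
  have h6 : ExteriorAlgebra.ιMulti k _ e =
      (l.map (CliffordAlgebra.ι (0 : QuadraticForm k V))).prod := by
    rw [hl, List.map_ofFn]; rfl
  have h7 : CliffordAlgebra.equivExterior Q ω = LinearMap.det σ •
      CliffordAlgebra.equivExterior Q ω := by
    have e1 : CliffordAlgebra.equivExterior Q ω = ExteriorAlgebra.ιMulti k _ (σ ∘ e) :=
      h3.trans h5.symm
    have e2 : CliffordAlgebra.equivExterior Q ω = ExteriorAlgebra.ιMulti k _ e :=
      h1.trans h6.symm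
    rw [← e1, ← e2] at h4
    exact h4
  rw [← map_smul] at h7
  have h8 := (CliffordAlgebra.equivExterior Q).injective h7
  have hωu : IsUnit ω := by
    rw [hω]
    refine List.prod_isUnit ?_
    intro m hm
    rw [hl, List.map_ofFn, List.mem_ofFn] at hm
    obtain ⟨i, rfl⟩ := hm
    refine CliffordAlgebra.isUnit_ι_of_isUnit Q (isUnit_iff_ne_zero.2 fun h0 => hne i ?_)
    simp [QuadraticMap.polar_self, h0]
  have h9 : (LinearMap.det σ - 1) • ω = 0 := by
    rw [sub_smul, one_smul, ← h8, sub_self]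
  rcases smul_eq_zero.1 h9 with h0 | h0
  · exact sub_eq_zero.1 h0
  · exact absurd h0 hωu.ne_zero
end

section
/- Let R be a commutative ring, M a free R-module of finite rank, and Q a quadratic form on M. For n ≥ 0, let C_n ⊆ Cl(M,Q) be the R-submodule spanned by all products of at most n elements of ι(M) (with C_{−1} = 0). Then the map sending m₁ ∧ ⋯ ∧ mₙ to the class of ι(m₁)⋯ι(mₙ) induces an R-module isomorphism from the n-th exterior power ⋀ⁿM onto the quotient C_n/C_{n−1}, and consequently each C_n is a free R-module. -/
section CliffFiltHelpers

variable {R : Type*} [CommRing R] {M : Type*} [AddCommGroup M] [Module R M]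

/-- Products of fewer than `n` vectors. -/
noncomputable def cliffFilt (Q : QuadraticForm R M) (n : ℕ) : Submodule R (CliffordAlgebra Q) :=
  ⨆ i ∈ Finset.range n, (LinearMap.range (CliffordAlgebra.ι Q)) ^ i

theorem cliffFilt_zero (Q : QuadraticForm R M) : cliffFilt Q 0 = ⊥ := by
  simp [cliffFilt]

theorem cliffFilt_succ (Q : QuadraticForm R M) (n : ℕ) :
    cliffFilt Q (n + 1) = (LinearMap.range (CliffordAlgebra.ι Q)) ^ n ⊔ cliffFilt Q n := by
  rw [cliffFilt, Finset.range_add_one, Finset.iSup_insert, cliffFilt]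

theorem cliffFilt_le_succ (Q : QuadraticForm R M) (n : ℕ) :
    cliffFilt Q n ≤ cliffFilt Q (n + 1) := by
  rw [cliffFilt_succ]; exact le_sup_right

theorem ι_mul_mem_cliffFilt (Q : QuadraticForm R M) (m : M) (n : ℕ) (x : CliffordAlgebra Q)
    (hx : x ∈ cliffFilt Q n) : CliffordAlgebra.ι Q m * x ∈ cliffFilt Q (n + 1) := by
  induction n generalizing x with
  | zero =>
    rw [cliffFilt_zero, Submodule.mem_bot] at hx
    simp [hx]
  | succ n ih =>
    rw [cliffFilt_succ] at hx
    obtain ⟨y, hy, z, hz, rfl⟩ := Submodule.mem_sup.1 hx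
    rw [mul_add]
    refine add_mem ?_ (cliffFilt_le_succ _ _ (ih z hz))
    rw [cliffFilt_succ]
    refine Submodule.mem_sup_left ?_
    rw [pow_succ']
    exact Submodule.mul_mem_mul ⟨m, rfl⟩ hy

/-- A linear map satisfying a suitable recursion preserves the filtration. -/
theorem cliffFilt_le_comap {Q Q' : QuadraticForm R M}
    (f : CliffordAlgebra Q →ₗ[R] CliffordAlgebra Q')
    (h1 : f 1 ∈ cliffFilt Q' 1)
    (hs : ∀ n m x, x ∈ cliffFilt Q (n + 1) → f x ∈ cliffFilt Q' (n + 1) →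
      f (CliffordAlgebra.ι Q m * x) ∈ cliffFilt Q' (n + 2)) (n : ℕ) :
    cliffFilt Q n ≤ (cliffFilt Q' n).comap f := by
  induction n with
  | zero => rw [cliffFilt_zero]; exact bot_le
  | succ n ih =>
    rw [cliffFilt_succ]
    refine sup_le ?_ (ih.trans (Submodule.comap_mono (cliffFilt_le_succ _ _)))
    clear ih
    induction n with
    | zero =>
      rw [pow_zero, Submodule.one_eq_span, Submodule.span_le]
      rintro _ rfl
      exact h1
    | succ n ih =>
      rw [pow_succ', Submodule.mul_le]
      rintro _ ⟨m, rfl⟩ x hx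
      refine hs n m x ?_ (ih hx)
      rw [cliffFilt_succ]
      exact Submodule.mem_sup_left hx

theorem one_mem_cliffFilt (Q : QuadraticForm R M) : (1 : CliffordAlgebra Q) ∈ cliffFilt Q 1 := by
  rw [cliffFilt_succ, pow_zero]
  exact Submodule.mem_sup_left (Submodule.one_le.1 le_rfl)

theorem contractLeft_mem_cliffFilt {Q : QuadraticForm R M} (d : Module.Dual R M) (n : ℕ)
    (x : CliffordAlgebra Q) (hx : x ∈ cliffFilt Q n) :
    CliffordAlgebra.contractLeft d x ∈ cliffFilt Q n := by
  refine cliffFilt_le_comap (CliffordAlgebra.contractLeft d) ?_ ?_ n hx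
  · rw [CliffordAlgebra.contractLeft_one]; exact zero_mem _
  · intro n m x hx hfx
    rw [CliffordAlgebra.contractLeft_ι_mul]
    exact sub_mem (Submodule.smul_mem _ _ (cliffFilt_le_succ _ _ hx))
      (ι_mul_mem_cliffFilt _ _ _ _ hfx)

theorem changeForm_mem_cliffFilt {Q Q' : QuadraticForm R M} {B : LinearMap.BilinForm R M}
    (h : B.toQuadraticMap = Q' - Q) (n : ℕ)
    (x : CliffordAlgebra Q) (hx : x ∈ cliffFilt Q n) :
    CliffordAlgebra.changeForm h x ∈ cliffFilt Q' n := by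
  refine cliffFilt_le_comap (CliffordAlgebra.changeForm h) ?_ ?_ n hx
  · rw [CliffordAlgebra.changeForm_one]; exact one_mem_cliffFilt _
  · intro n m x hx hfx
    rw [CliffordAlgebra.changeForm_ι_mul]
    exact sub_mem (ι_mul_mem_cliffFilt _ _ _ _ hfx)
      (cliffFilt_le_succ _ _ (contractLeft_mem_cliffFilt _ _ _ hfx))

theorem prod_mem_cliffFilt (Q : QuadraticForm R M) (l : List M) :
    (l.map (CliffordAlgebra.ι Q)).prod ∈ cliffFilt Q (l.length + 1) := by
  induction l with
  | nil => simpa using one_mem_cliffFilt Q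
  | cons a l ih => simpa using ι_mul_mem_cliffFilt Q a _ _ ih

theorem changeForm_prod_sub {Q Q' : QuadraticForm R M} {B : LinearMap.BilinForm R M}
    (h : B.toQuadraticMap = Q' - Q) (l : List M) :
    CliffordAlgebra.changeForm h (l.map (CliffordAlgebra.ι Q)).prod -
      (l.map (CliffordAlgebra.ι Q')).prod ∈ cliffFilt Q' l.length := by
  induction l with
  | nil => simp
  | cons a l ih =>
    rw [List.map_cons, List.prod_cons, List.map_cons, List.prod_cons,
      CliffordAlgebra.changeForm_ι_mul, sub_right_comm, ← mul_sub, List.length_cons]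
    exact sub_mem (ι_mul_mem_cliffFilt _ _ _ _ ih) (contractLeft_mem_cliffFilt _ _ _
      (changeForm_mem_cliffFilt h _ _ (prod_mem_cliffFilt Q l)))

theorem map_changeFormEquiv_cliffFilt {Q Q' : QuadraticForm R M} {B : LinearMap.BilinForm R M}
    (h : B.toQuadraticMap = Q' - Q) (n : ℕ) :
    (cliffFilt Q n).map (CliffordAlgebra.changeFormEquiv h).toLinearMap = cliffFilt Q' n := by
  apply le_antisymm
  · rintro _ ⟨x, hx, rfl⟩
    exact changeForm_mem_cliffFilt h n x hx
  · intro x hx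
    exact ⟨(CliffordAlgebra.changeFormEquiv h).symm x,
      changeForm_mem_cliffFilt (CliffordAlgebra.changeForm.neg_proof h) n x hx,
      LinearEquiv.apply_symm_apply _ _⟩

theorem ext_disjoint (n : ℕ) :
    Disjoint (⋀[R]^n M) (cliffFilt (0 : QuadraticForm R M) n) := by
  have h := (DirectSum.Decomposition.isInternal (fun i : ℕ ↦ ⋀[R]^i M)).submodule_iSupIndep
  exact h.disjoint_biSup (x := n) (y := (Finset.range n : Set ℕ)) (by simp)

theorem ext_free [Module.Free R M] (n : ℕ) :
    Module.Free R (cliffFilt (0 : QuadraticForm R M) n) := by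
  induction n with
  | zero =>
    rw [cliffFilt_zero]; infer_instance
  | succ n ih =>
    let f := (⋀[R]^n M).subtype.coprod (cliffFilt (0 : QuadraticForm R M) n).subtype
    have hf : Function.Injective f := by
      rw [← LinearMap.ker_eq_bot, LinearMap.ker_coprod_of_disjoint_range]
      · simp
      · simpa using ext_disjoint n
    have hr : LinearMap.range f = cliffFilt (0 : QuadraticForm R M) (n + 1) := by
      rw [LinearMap.range_coprod, Submodule.range_subtype, Submodule.range_subtype,
        cliffFilt_succ]
    exact Module.Free.of_equiv ((LinearEquiv.ofInjective f hf).trans (LinearEquiv.ofEq _ _ hr))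

end CliffFiltHelpers


/-- Let `C n ⊆ Cl(M,Q)` be the span of products of at most `n` elements of `ι(M)` (with
`C (-1) = 0`, encoded by `D` with `D 0 = ⊥`, `D (n+1) = C n`).  Then `m₁ ∧ ⋯ ∧ mₙ ↦
[ι(m₁)⋯ι(mₙ)]` induces an isomorphism `⋀ⁿM ≅ C n / C (n-1)`, and each `C n` is free. -/
theorem clifford_filtration_graded_exterior (R : Type*) [CommRing R]
    (M : Type*) [AddCommGroup M] [Module R M] [Module.Free R M] [Module.Finite R M]
    (Q : QuadraticForm R M)
    (C : ℕ → Submodule R (CliffordAlgebra Q))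
    (hC : ∀ n : ℕ, C n = ⨆ i ∈ Finset.range (n + 1),
      (LinearMap.range (CliffordAlgebra.ι Q)) ^ i)
    (D : ℕ → Submodule R (CliffordAlgebra Q))
    (hD0 : D 0 = ⊥) (hDs : ∀ n : ℕ, D (n + 1) = C n) :
    ∀ n : ℕ,
      (∃ e : (⋀[R]^n M) ≃ₗ[R] ↥(Submodule.map (D n).mkQ (C n)),
        ∀ m : Fin n → M,
          ((e ⟨ExteriorAlgebra.ιMulti R n m,
              ExteriorAlgebra.ιMulti_range R n (Set.mem_range_self m)⟩ :
            CliffordAlgebra Q ⧸ D n)) =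
          (D n).mkQ ((List.ofFn fun i => CliffordAlgebra.ι Q (m i)).prod)) ∧
      Module.Free R ↥(C n) := by
  have hC' : ∀ n, C n = cliffFilt Q (n + 1) := hC
  have hD' : ∀ n, D n = cliffFilt Q n := by
    intro n
    cases n with
    | zero => rw [hD0, cliffFilt_zero]
    | succ n => rw [hDs, hC']
  obtain ⟨B, hB⟩ := LinearMap.BilinMap.toQuadraticMap_surjective (R := R) (M := M) (N := R) (Q - 0)
  intro n
  rw [hC', hD']
  have hmap := map_changeFormEquiv_cliffFilt hB
  refine ⟨?_, ?_⟩
  · let f : (⋀[R]^n M) →ₗ[R] (CliffordAlgebra Q ⧸ cliffFilt Q n) :=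
      (cliffFilt Q n).mkQ ∘ₗ (CliffordAlgebra.changeFormEquiv hB).toLinearMap ∘ₗ
        (⋀[R]^n M).subtype
    have hf : Function.Injective f := by
      rw [← LinearMap.ker_eq_bot, eq_bot_iff]
      intro x hx
      have hx' : CliffordAlgebra.changeFormEquiv hB (x : ExteriorAlgebra R M) ∈ cliffFilt Q n :=
        (Submodule.Quotient.mk_eq_zero _).1 hx
      rw [← hmap n] at hx'
      obtain ⟨y, hy, hxy⟩ := hx'
      have : y = (x : ExteriorAlgebra R M) := (CliffordAlgebra.changeFormEquiv hB).injective hxy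
      rw [this] at hy
      exact Subtype.ext ((Submodule.disjoint_def.1 (ext_disjoint n)) _ x.2 hy)
    have hr : LinearMap.range f = Submodule.map (cliffFilt Q n).mkQ (cliffFilt Q (n + 1)) := by
      rw [← hmap (n + 1), cliffFilt_succ, Submodule.map_sup, hmap n, Submodule.map_sup,
        Submodule.mkQ_map_self, sup_bot_eq, LinearMap.range_comp, LinearMap.range_comp,
        Submodule.range_subtype]
    refine ⟨(LinearEquiv.ofInjective f hf).trans (LinearEquiv.ofEq _ _ hr), fun m => ?_⟩
    change (cliffFilt Q n).mkQ (CliffordAlgebra.changeForm hB (ExteriorAlgebra.ιMulti R n m)) = _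
    rw [← sub_eq_zero, ← map_sub, Submodule.mkQ_apply, Submodule.Quotient.mk_eq_zero,
      ExteriorAlgebra.ιMulti_apply]
    have := changeForm_prod_sub hB (List.ofFn m)
    rw [List.map_ofFn, List.map_ofFn, List.length_ofFn] at this
    exact this
  · have := ext_free (R := R) (M := M) (n + 1)
    exact Module.Free.of_equiv (((CliffordAlgebra.changeFormEquiv hB).submoduleMap _).trans
      (LinearEquiv.ofEq _ _ (hmap (n + 1))))
end
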